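/- arXiv:math/0511018 — 2 statements merged into one kernel-verified Lean document; each statement's English description precedes it below -/
import Mathlib

section
/- Let n ≥ 1, 1 ≤ j ≤ n, let H be an n×n complex matrix, a ∈ ℂⁿ, and φ a (0,j)-coefficient system on ℂⁿ. Define the (0,j)-coefficient system w by w_I := Σ_{m∈I} σ^{m(I∖m)}_I a_m for strictly increasing I of length j (extended antisymmetrically), and set v_J := Σ_{m=1}^n a_m φ_{mJ} for strictly increasing J of length j−1. Then Σ'_{|J|=j−1} Σ_{k,l=1}^n H_{lk} φ_{lJ} a_k − Σ'_{|J|=j−1} Σ_{k,l=1}^n H_{lk} φ_{lJ} w_{kJ} = −Σ_{k=1}^n H_{kk} · (Σ'_{|J|=j−1, k∈J} v_J) + Σ_{k≠l} H_{lk} · (Σ'_{|J|=j−1, l∈J, k∉J} σ^{l(k∪(J∖l))}_{kJ} v_J). -/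
open scoped BigOperators
open MeasureTheory

namespace HM

/-- The finset of strictly increasing multi-indices of length `q` with entries in `Fin n`. -/
def Incr (n q : ℕ) : Finset (Fin q → Fin n) :=
  Finset.univ.filter (fun I => ∀ a b : Fin q, a < b → I a < I b)

/-- Prepend the index `k` to a `(q-1)`-tuple `J`, giving the `q`-tuple `kJ`. -/
def cons' {n : ℕ} (q : ℕ) (k : Fin n) (J : Fin (q - 1) → Fin n) : Fin q → Fin n :=
  fun i => if h : (i : ℕ) = 0 then k else J ⟨(i : ℕ) - 1, by have := i.isLt; omega⟩

/-- A (0,q)-coefficient system: an antisymmetric assignment of complex numbers to q-tuples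
(hence vanishing on tuples with a repeated index). -/
def IsCoeff {n q : ℕ} (u : (Fin q → Fin n) → ℂ) : Prop :=
  ∀ (σ : Equiv.Perm (Fin q)) (I : Fin q → Fin n),
    u (I ∘ σ) = ((Equiv.Perm.sign σ : ℤ) : ℂ) * u I

/-- `|u|²`, the sum of `|u_I|²` over strictly increasing multi-indices `I`. -/
noncomputable def nSq {n q : ℕ} (u : (Fin q → Fin n) → ℂ) : ℝ :=
  ∑ I ∈ Incr n q, ‖u I‖ ^ 2

/-- The Hessian form of a matrix `H` on coefficient systems:
`H(u,v) = Σ'_{|J|=q-1} Σ_{k,l} H_{lk} u_{lJ} conj(v_{kJ})`. -/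
noncomputable def mForm {n : ℕ} (q : ℕ) (H : Matrix (Fin n) (Fin n) ℂ)
    (u v : (Fin q → Fin n) → ℂ) : ℂ :=
  ∑ J ∈ Incr n (q - 1), ∑ k : Fin n, ∑ l : Fin n,
    H l k * u (cons' q l J) * star (v (cons' q k J))

/-- `σ^I_J`: the sign of the permutation rearranging `I` into `J`; `0` if `J` is not a
rearrangement of `I` (in particular `0` if `I` has a repeated entry). -/
def permSign {n p : ℕ} (I J : Fin p → Fin n) : ℤ :=
  if Function.Injective I then
    ∑ π : Equiv.Perm (Fin p), if J = I ∘ π then ((Equiv.Perm.sign π : ℤ)) else 0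
  else 0

/-- The Wirtinger derivative `∂f/∂z_k` of a complex-valued function, via real Fréchet
derivatives: `½(∂f/∂x_k − i ∂f/∂y_k)`. -/
noncomputable def dz {n : ℕ} (f : (Fin n → ℂ) → ℂ) (k : Fin n) (z : Fin n → ℂ) : ℂ :=
  (1/2 : ℂ) * (fderiv ℝ f z (Pi.single k 1) - Complex.I * fderiv ℝ f z (Pi.single k Complex.I))

/-- The Wirtinger derivative `∂f/∂z̄_k`: `½(∂f/∂x_k + i ∂f/∂y_k)`. -/
noncomputable def dzbar {n : ℕ} (f : (Fin n → ℂ) → ℂ) (k : Fin n) (z : Fin n → ℂ) : ℂ :=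
  (1/2 : ℂ) * (fderiv ℝ f z (Pi.single k 1) + Complex.I * fderiv ℝ f z (Pi.single k Complex.I))

/-- The mixed Wirtinger Hessian `∂²f/∂z_l∂z̄_k` of a real-valued function. -/
noncomputable def hessW {n : ℕ} (f : (Fin n → ℂ) → ℝ) (l k : Fin n) (z : Fin n → ℂ) : ℂ :=
  dz (fun w => dzbar (fun y => (f y : ℂ)) k w) l z

/-- The Hessian form `i∂∂̄f(u,u)(z) = Σ'_{|J|=q-1} Σ_{k,l} ∂²f/∂z_l∂z̄_k(z) u_{lJ} conj(u_{kJ})`. -/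
noncomputable def hForm {n : ℕ} (q : ℕ) (f : (Fin n → ℂ) → ℝ)
    (u : (Fin q → Fin n) → ℂ) (z : Fin n → ℂ) : ℂ :=
  ∑ J ∈ Incr n (q - 1), ∑ k : Fin n, ∑ l : Fin n,
    hessW f l k z * u (cons' q l J) * star (u (cons' q k J))

/-- Coefficient of `∂̄u` on the `(q+1)`-tuple `M`:
`(∂̄u)_M = Σ_k Σ'_{|J|=q} σ^{kJ}_M ∂u_J/∂z̄_k`. -/
noncomputable def dbarC {n : ℕ} (q : ℕ) (u : (Fin q → Fin n) → (Fin n → ℂ) → ℂ)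
    (M : Fin (q + 1) → Fin n) (z : Fin n → ℂ) : ℂ :=
  ∑ k : Fin n, ∑ J ∈ Incr n q, ((permSign (cons' (q + 1) k J) M : ℤ) : ℂ) * dzbar (u J) k z

/-- Coefficient of `ϑu` on the `(q-1)`-tuple `J`: `(ϑu)_J = −Σ_l ∂u_{lJ}/∂z_l`. -/
noncomputable def thetaC {n : ℕ} (q : ℕ) (u : (Fin q → Fin n) → (Fin n → ℂ) → ℂ)
    (J : Fin (q - 1) → Fin n) (z : Fin n → ℂ) : ℂ :=
  -∑ l : Fin n, dz (u (cons' q l J)) l z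

/-- Pointwise `|∂̄u|²`. -/
noncomputable def dbarSq {n : ℕ} (q : ℕ) (u : (Fin q → Fin n) → (Fin n → ℂ) → ℂ)
    (z : Fin n → ℂ) : ℝ :=
  ∑ M ∈ Incr n (q + 1), ‖dbarC q u M z‖ ^ 2

/-- Pointwise `|ϑu|²`. -/
noncomputable def thetaSq {n : ℕ} (q : ℕ) (u : (Fin q → Fin n) → (Fin n → ℂ) → ℂ)
    (z : Fin n → ℂ) : ℝ :=
  ∑ J ∈ Incr n (q - 1), ‖thetaC q u J z‖ ^ 2

/-- Remove the `i`-th entry of a `j`-tuple, giving a `(j-1)`-tuple. -/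
def removeIdx {n j : ℕ} (I : Fin j → Fin n) (i : Fin j) : Fin (j - 1) → Fin n :=
  fun t => if (t : ℕ) < (i : ℕ) then I ⟨t, by have := t.isLt; omega⟩
    else I ⟨(t : ℕ) + 1, by have := t.isLt; omega⟩

/-- The increasing `j`-tuple listing a finset `S` (with default `d` out of range). -/
def sortedTuple {n : ℕ} (j : ℕ) (S : Finset (Fin n)) (d : Fin n) : Fin j → Fin n :=
  fun t => (S.sort (· ≤ ·)).getD t d

end HM

/-! Identify a `(0,q)`-coefficient system with a function on finsets of indices, and let `ι_k`
and `e_k ∧ ·` be contraction and exterior multiplication by the `k`-th basis vector. Writing `𝟙` for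
the function with all coefficients `1`, the system `w` is `a ∧ 𝟙`. The canonical anticommutation
relation gives `a_k 𝟙 - ι_k (a ∧ 𝟙) = a ∧ ι_k 𝟙`, and contraction is adjoint to exterior
multiplication, so
`⟨ι_l φ, a_k 𝟙 - ι_k w⟩ = ⟨ι_a ι_l φ, ι_k 𝟙⟩ = -⟨ι_l ι_a φ, ι_k 𝟙⟩ = -⟨v, e_l ∧ ι_k 𝟙⟩`.
The coefficients of `e_l ∧ ι_k 𝟙` are the signs on the right-hand side of the identity. -/

namespace HM

open Finset Matrix

section ExteriorOperators

variable {α : Type*} [LinearOrder α] {R : Type*} [CommRing R]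

/-- For `k ∉ S`, the sign of the permutation sorting the tuple `kS`, where `S` is listed
increasingly. Only entries below `k` are counted, so `S` and `insert k S` give the same value. -/
def insertSign (k : α) (S : Finset α) : ℤ := (-1) ^ #{x ∈ S | x < k}

lemma insertSign_mul_self (k : α) (S : Finset α) : insertSign k S * insertSign k S = 1 := by
  rw [insertSign, ← mul_pow, neg_one_mul, neg_neg, one_pow]

@[simp]
lemma insertSign_insert_self (k : α) (S : Finset α) :
    insertSign k (insert k S) = insertSign k S := by
  simp [insertSign, filter_insert]

lemma insertSign_insert {k x : α} {S : Finset α} (hx : x ∉ S) :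
    insertSign k (insert x S) = if x < k then -insertSign k S else insertSign k S := by
  unfold insertSign
  split_ifs with h
  · rw [filter_insert, if_pos h, card_insert_of_notMem (by simp [hx]), pow_succ, mul_neg_one]
  · rw [filter_insert, if_neg h]

lemma insertSign_mul_insertSign_insert {k l : α} {S : Finset α} (hkl : k ≠ l) (hk : k ∉ S)
    (hl : l ∉ S) :
    insertSign k S * insertSign l (insert k S) = -(insertSign l S * insertSign k (insert l S)) := by
  rw [insertSign_insert hk, insertSign_insert hl]
  rcases lt_or_gt_of_ne hkl with h | h <;> simp [h, h.not_gt, mul_comm]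

lemma insertSign_insert_mul_insertSign_insert {k l : α} {S : Finset α} (hkl : k ≠ l) (hk : k ∉ S)
    (hl : l ∉ S) :
    insertSign k (insert l S) * insertSign l (insert k S) = -(insertSign k S * insertSign l S) := by
  rw [insertSign_insert hk, insertSign_insert hl]
  rcases lt_or_gt_of_ne hkl with h | h <;> simp [h, h.not_gt]

/-- Contraction `ι_k` with the `k`-th basis vector, acting on the coefficients of exterior forms
indexed by finsets of basis elements. -/
def contract (k : α) : (Finset α → R) →ₗ[R] (Finset α → R) where
  toFun f S := if k ∈ S then 0 else insertSign k S * f (insert k S)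
  map_add' f g := by ext S; simp only [Pi.add_apply]; split_ifs <;> ring
  map_smul' c f := by
    ext S; simp only [Pi.smul_apply, smul_eq_mul, RingHom.id_apply]; split_ifs <;> ring

/-- Left exterior multiplication `e_k ∧ ·` by the `k`-th basis covector, acting on the coefficients
of exterior forms indexed by finsets of basis elements. -/
def wedge (k : α) : (Finset α → R) →ₗ[R] (Finset α → R) where
  toFun f S := if k ∈ S then insertSign k (S.erase k) * f (S.erase k) else 0
  map_add' f g := by ext S; simp only [Pi.add_apply]; split_ifs <;> ring
  map_smul' c f := by
    ext S; simp only [Pi.smul_apply, smul_eq_mul, RingHom.id_apply]; split_ifs <;> ring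

lemma contract_apply (k : α) (f : Finset α → R) (S : Finset α) :
    contract k f S = if k ∈ S then 0 else insertSign k S * f (insert k S) := rfl

lemma wedge_apply (k : α) (f : Finset α → R) (S : Finset α) :
    wedge k f S = if k ∈ S then insertSign k (S.erase k) * f (S.erase k) else 0 := rfl

lemma contract_contract (k l : α) (f : Finset α → R) :
    contract k (contract l f) = -contract l (contract k f) := by
  ext S
  simp only [contract_apply, Pi.neg_apply, mem_insert]
  rcases eq_or_ne k l with rfl | hkl
  · simp
  by_cases hk : k ∈ S
  · simp [hk]
  by_cases hl : l ∈ S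
  · simp [hl]
  have sign_swap : (insertSign k S * insertSign l (insert k S) : R)
      = -(insertSign l S * insertSign k (insert l S)) :=
    mod_cast congrArg (Int.cast : ℤ → R) (insertSign_mul_insertSign_insert hkl hk hl)
  simp only [hk, hl, hkl, hkl.symm, or_self, if_false, insert_comm l k]
  linear_combination f (insert k (insert l S)) * sign_swap

lemma contract_wedge_self_add (k : α) (f : Finset α → R) :
    contract k (wedge k f) + wedge k (contract k f) = f := by
  ext S
  have sign_sq (T : Finset α) : (insertSign k T : R) * insertSign k T = 1 := by
    rw [← Int.cast_mul, insertSign_mul_self, Int.cast_one]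
  by_cases hk : k ∈ S
  · simp [contract_apply, wedge_apply, hk, ← mul_assoc, sign_sq]
  · simp [contract_apply, wedge_apply, hk, ← mul_assoc, sign_sq]

lemma contract_wedge_of_ne {k l : α} (hkl : k ≠ l) (f : Finset α → R) :
    contract k (wedge l f) = -wedge l (contract k f) := by
  ext S
  simp only [contract_apply, wedge_apply, Pi.neg_apply, mem_insert, mem_erase, hkl, hkl.symm,
    false_or, ne_eq, not_false_eq_true, true_and]
  by_cases hl : l ∈ S
  · by_cases hk : k ∈ S
    · simp [hk]
    obtain ⟨T, hT, rfl⟩ : ∃ T, l ∉ T ∧ insert l T = S :=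
      ⟨S.erase l, notMem_erase l S, insert_erase hl⟩
    have hkT : k ∉ T := fun h => hk (mem_insert_of_mem h)
    have sign_swap : (insertSign k (insert l T) * insertSign l (insert k T) : R)
        = -(insertSign k T * insertSign l T) :=
      mod_cast congrArg (Int.cast : ℤ → R) (insertSign_insert_mul_insertSign_insert hkl hkT hT)
    simp only [hk, hl, if_true, if_false, erase_insert_of_ne hkl, erase_insert hT]
    linear_combination f (insert k T) * sign_swap
  · simp [hl]

lemma wedge_contract_one_self (k : α) (S : Finset α) :
    wedge k (contract k (1 : Finset α → R)) S = if k ∈ S then 1 else 0 := by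
  simp [wedge_apply, contract_apply, ← Int.cast_mul, insertSign_mul_self]

lemma wedge_contract_one_of_ne {k l : α} (hkl : k ≠ l) (S : Finset α) :
    wedge l (contract k (1 : Finset α → R)) S =
      if l ∈ S ∧ k ∉ S then -(insertSign l (insert k (S.erase l)) * insertSign k S : ℤ) else 0 := by
  by_cases hl : l ∈ S
  · by_cases hk : k ∈ S
    · simp [wedge_apply, contract_apply, hl, hk, hkl]
    have sign_swap := insertSign_insert_mul_insertSign_insert hkl.symm (notMem_erase l S)
      (fun h => hk (mem_of_mem_erase h))
    rw [insert_erase hl] at sign_swap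
    simp [wedge_apply, contract_apply, hl, hk, sign_swap]
  · simp [wedge_apply, hl]

variable [Fintype α]

lemma contract_dotProduct (k : α) (f g : Finset α → R) :
    contract k f ⬝ᵥ g = f ⬝ᵥ wedge k g := by
  have contract_sum : contract k f ⬝ᵥ g
      = ∑ S with k ∉ S, insertSign k S * f (insert k S) * g S := by
    rw [sum_filter]
    exact sum_congr rfl fun S _ => by simp only [contract_apply, ite_not, ite_mul, zero_mul]
  have wedge_sum : f ⬝ᵥ wedge k g
      = ∑ S with k ∈ S, f S * (insertSign k (S.erase k) * g (S.erase k)) := by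
    rw [sum_filter]
    exact sum_congr rfl fun S _ => by simp only [wedge_apply, mul_ite, mul_zero]
  rw [contract_sum, wedge_sum]
  refine sum_nbij' (insert k) (fun S => S.erase k) ?_ ?_ ?_ ?_ ?_
  · simp
  · simp
  · simp +contextual
  · simp +contextual [insert_erase]
  · simp +contextual [mul_left_comm, mul_assoc]

/-- Contraction `ι_a = ∑ₘ aₘ ι_m` with the vector `a`. -/
def contractVec (a : α → R) : (Finset α → R) →ₗ[R] (Finset α → R) := ∑ m, a m • contract m

/-- Left exterior multiplication `a ∧ · = ∑ₘ aₘ e_m ∧ ·` by the covector `a`. -/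
def wedgeVec (a : α → R) : (Finset α → R) →ₗ[R] (Finset α → R) := ∑ m, a m • wedge m

lemma contractVec_apply (a : α → R) (f : Finset α → R) :
    contractVec a f = ∑ m, a m • contract m f := by
  simp [contractVec]

lemma wedgeVec_apply (a : α → R) (f : Finset α → R) :
    wedgeVec a f = ∑ m, a m • wedge m f := by
  simp [wedgeVec]

lemma contractVec_dotProduct (a : α → R) (f g : Finset α → R) :
    contractVec a f ⬝ᵥ g = f ⬝ᵥ wedgeVec a g := by
  simp only [contractVec_apply, wedgeVec_apply, sum_dotProduct, dotProduct_sum, smul_dotProduct,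
    dotProduct_smul, contract_dotProduct]

lemma contractVec_contract (a : α → R) (l : α) (f : Finset α → R) :
    contractVec a (contract l f) = -contract l (contractVec a f) := by
  simp only [contractVec_apply, contract_contract _ l, map_sum, map_smul, smul_neg,
    sum_neg_distrib]

lemma smul_sub_contract_wedgeVec (a : α → R) (k : α) (f : Finset α → R) :
    a k • f - contract k (wedgeVec a f) = wedgeVec a (contract k f) := by
  have anticomm (m : α) : a m • contract k (wedge m f) + a m • wedge m (contract k f)
      = if k = m then a m • f else 0 := by
    rw [← smul_add]
    split_ifs with h
    · rw [h, contract_wedge_self_add]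
    · rw [contract_wedge_of_ne h, neg_add_cancel, smul_zero]
  rw [sub_eq_iff_eq_add']
  simp only [wedgeVec_apply, map_sum, map_smul, ← sum_add_distrib, anticomm, sum_ite_eq, mem_univ,
    if_true]

theorem contract_dotProduct_smul_sub_contract_wedgeVec (a : α → R) (k l : α)
    (f g : Finset α → R) :
    contract l f ⬝ᵥ (a k • g - contract k (wedgeVec a g))
      = -(contractVec a f ⬝ᵥ wedge l (contract k g)) := by
  rw [smul_sub_contract_wedgeVec, ← contractVec_dotProduct, contractVec_contract,
    neg_dotProduct, contract_dotProduct]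

end ExteriorOperators

section IncreasingTuples

lemma exists_strictMono_image_eq {α : Type*} [LinearOrder α] {q : ℕ} {S : Finset α}
    (hS : #S = q) : ∃ I : Fin q → α, StrictMono I ∧ univ.image I = S :=
  ⟨S.orderEmbOfFin hS, (S.orderEmbOfFin hS).strictMono, image_orderEmbOfFin_univ S hS⟩

lemma eq_of_strictMono_of_image_eq {α : Type*} [LinearOrder α] {q : ℕ} {I J : Fin q → α}
    (hI : StrictMono I) (hJ : StrictMono J) (h : univ.image I = univ.image J) : I = J := by
  rw [← hI.range_inj hJ, ← Set.image_univ, ← Set.image_univ, ← coe_univ, ← coe_image, ← coe_image,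
    h]

lemma card_image_of_strictMono {α : Type*} [LinearOrder α] {q : ℕ} {I : Fin q → α}
    (hI : StrictMono I) : #(univ.image I) = q := by
  rw [card_image_of_injective _ hI.injective, card_univ, Fintype.card_fin]

lemma insertSign_image {α : Type*} [LinearOrder α] {q : ℕ} {I : Fin q → α} (hI : StrictMono I)
    (i : Fin q) : insertSign (I i) (univ.image I) = (-1) ^ (i : ℕ) := by
  have entries_lt : ({x ∈ univ.image I | x < I i} : Finset α) = (Iio i).image I := by
    ext x
    simp only [mem_filter, mem_image, mem_univ, true_and, mem_Iio]
    constructor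
    · rintro ⟨⟨t, rfl⟩, ht⟩
      exact ⟨t, hI.lt_iff_lt.1 ht, rfl⟩
    · rintro ⟨t, ht, rfl⟩
      exact ⟨⟨t, rfl⟩, hI ht⟩
  rw [insertSign, entries_lt, card_image_of_injective _ hI.injective, Fin.card_Iio]

variable {n p q : ℕ}

lemma mem_Incr {J : Fin q → Fin n} : J ∈ Incr n q ↔ StrictMono J := by
  simp [Incr, StrictMono]

lemma sum_Incr_image {M : Type*} [AddCommMonoid M] (f : Finset (Fin n) → M) :
    ∑ J ∈ Incr n q, f (univ.image J) = ∑ S with #S = q, f S := by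
  refine sum_nbij (fun J => univ.image J) ?_ ?_ ?_ (fun _ _ => rfl)
  · intro J hJ
    simpa using card_image_of_strictMono (mem_Incr.1 hJ)
  · intro I hI J hJ h
    exact eq_of_strictMono_of_image_eq (mem_Incr.1 hI) (mem_Incr.1 hJ) h
  · intro S hS
    obtain ⟨J, hJ, rfl⟩ := exists_strictMono_image_eq (mem_filter.1 hS).2
    exact ⟨J, mem_Incr.2 hJ, rfl⟩

lemma sortedTuple_eq_orderEmbOfFin {S : Finset (Fin n)} (hS : #S = q) (d : Fin n) :
    sortedTuple q S d = S.orderEmbOfFin hS := by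
  funext t
  rw [sortedTuple, orderEmbOfFin_apply, List.getD_eq_getElem _ _ (by simp [hS])]
  rfl

lemma cons'_eq_cons (k : Fin n) (J : Fin p → Fin n) :
    cons' (p + 1) k J = (Fin.cons k J : Fin (p + 1) → Fin n) := by
  funext t
  cases t using Fin.cases <;> simp [cons']

lemma removeIdx_eq_removeNth (I : Fin (p + 1) → Fin n) (i : Fin (p + 1)) :
    removeIdx I i = i.removeNth I := by
  funext t
  simp only [removeIdx, Fin.removeNth, Fin.succAbove, Fin.lt_def, Fin.val_castSucc]
  split_ifs <;> rfl

lemma cons'_removeIdx (I : Fin (p + 1) → Fin n) (i : Fin (p + 1)) :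
    cons' (p + 1) (I i) (removeIdx I i) = I ∘ i.cycleRange.symm := by
  rw [removeIdx_eq_removeNth, cons'_eq_cons, Fin.cons_removeNth_eq_comp_cycleRange_symm]

lemma removeNth_eq_of_image_eq {I : Fin (p + 1) → Fin n} {J : Fin p → Fin n} (hI : StrictMono I)
    (hJ : StrictMono J) {i : Fin (p + 1)} (hi : I i ∉ univ.image J)
    (h : univ.image I = insert (I i) (univ.image J)) : i.removeNth I = J := by
  have hmono : StrictMono (i.removeNth I) := hI.comp (Fin.strictMono_succAbove i)
  refine eq_of_strictMono_of_image_eq hmono hJ ?_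
  rw [← erase_insert hi, ← h]
  change univ.image (I ∘ i.succAbove) = _
  rw [← image_image, Fin.image_succAbove_univ, compl_singleton, image_erase hI.injective]

lemma cons'_eq_comp_perm {I : Fin (p + 1) → Fin n} {J : Fin p → Fin n} {k : Fin n}
    (hI : StrictMono I) (hJ : StrictMono J) (hk : k ∉ univ.image J)
    (h : univ.image I = insert k (univ.image J)) :
    ∃ π : Equiv.Perm (Fin (p + 1)),
      cons' (p + 1) k J = I ∘ π ∧ (Equiv.Perm.sign π : ℤ) = insertSign k (univ.image J) := by
  obtain ⟨i, -, rfl⟩ : ∃ i ∈ univ, I i = k := mem_image.1 (h ▸ mem_insert_self k _)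
  refine ⟨i.cycleRange.symm, ?_, ?_⟩
  · rw [← cons'_removeIdx, removeIdx_eq_removeNth, removeNth_eq_of_image_eq hI hJ hk h]
  · rw [Equiv.Perm.sign_symm, Fin.sign_cycleRange, ← insertSign_insert_self, ← h,
      insertSign_image hI]
    norm_cast

end IncreasingTuples

section CoefficientSystems

variable {n p q : ℕ}

lemma permSign_comp_comp {I : Fin q → Fin n} (hI : Function.Injective I)
    (σ τ : Equiv.Perm (Fin q)) :
    permSign (I ∘ σ) (I ∘ τ) = Equiv.Perm.sign σ * Equiv.Perm.sign τ := by
  have eq_iff (π : Equiv.Perm (Fin q)) : I ∘ τ = (I ∘ σ) ∘ π ↔ π = σ⁻¹ * τ := by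
    rw [Function.comp_assoc, hI.comp_left.eq_iff, ← Equiv.Perm.coe_mul, DFunLike.coe_fn_eq,
      eq_inv_mul_iff_mul_eq, eq_comm]
  rw [permSign, if_pos (hI.comp σ.injective)]
  simp [eq_iff]

lemma permSign_cons'_cons' {J K : Fin p → Fin n} {k l : Fin n} (hJ : StrictMono J)
    (hK : StrictMono K) (hk : k ∉ univ.image J) (hl : l ∉ univ.image K)
    (h : insert l (univ.image K) = insert k (univ.image J)) :
    permSign (cons' (p + 1) l K) (cons' (p + 1) k J)
      = insertSign l (univ.image K) * insertSign k (univ.image J) := by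
  obtain ⟨I, hI, hIJ⟩ := exists_strictMono_image_eq (q := p + 1) (S := insert k (univ.image J))
    (by rw [card_insert_of_notMem hk, card_image_of_strictMono hJ])
  obtain ⟨σ, hσ, sign_σ⟩ := cons'_eq_comp_perm hI hK hl (hIJ.trans h.symm)
  obtain ⟨τ, hτ, sign_τ⟩ := cons'_eq_comp_perm hI hJ hk hIJ
  rw [hσ, hτ, permSign_comp_comp hI.injective, sign_σ, sign_τ]

lemma permSign_cons'_removeIdx {I : Fin (p + 1) → Fin n} (hI : StrictMono I) (i : Fin (p + 1)) :
    permSign (cons' (p + 1) (I i) (removeIdx I i)) I = insertSign (I i) (univ.image I) := by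
  have h := permSign_comp_comp hI.injective i.cycleRange.symm 1
  rw [Equiv.Perm.coe_one, Function.comp_id] at h
  rw [cons'_removeIdx, h, Equiv.Perm.sign_symm, Fin.sign_cycleRange, insertSign_image hI]
  simp

lemma IsCoeff.eq_zero_of_not_injective {u : (Fin q → Fin n) → ℂ} (hu : IsCoeff u)
    {I : Fin q → Fin n} (hI : ¬ Function.Injective I) : u I = 0 := by
  obtain ⟨s, t, hst, hne⟩ := Function.not_injective_iff.1 hI
  have swap_eq : I ∘ Equiv.swap s t = I := by
    funext x
    rw [Function.comp_apply, Equiv.swap_apply_def]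
    split_ifs with hs ht
    · rw [hs, hst]
    · rw [ht, hst]
    · rfl
  have h := hu (Equiv.swap s t) I
  rw [swap_eq, Equiv.Perm.sign_swap hne] at h
  simpa [self_eq_neg] using h

lemma IsCoeff.apply_cons' {u : (Fin (p + 1) → Fin n) → ℂ} (hu : IsCoeff u)
    {f : Finset (Fin n) → ℂ} (hf : ∀ I, StrictMono I → u I = f (univ.image I))
    {J : Fin p → Fin n} (hJ : StrictMono J) (k : Fin n) :
    u (cons' (p + 1) k J) = contract k f (univ.image J) := by
  rw [contract_apply]
  split_ifs with hk
  · refine hu.eq_zero_of_not_injective ?_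
    rw [cons'_eq_cons, Fin.cons_injective_iff]
    simp_all
  · obtain ⟨I, hI, hIJ⟩ := exists_strictMono_image_eq (q := p + 1) (S := insert k (univ.image J))
      (by rw [card_insert_of_notMem hk, card_image_of_strictMono hJ])
    obtain ⟨π, hπ, sign_π⟩ := cons'_eq_comp_perm hI hJ hk hIJ
    rw [hπ, hu, sign_π, hf I hI, hIJ]

/-- The function on finsets encoding a coefficient system on `q`-tuples through its values on
increasing tuples; it is `0` on finsets of cardinality other than `q`. -/
def toFinsetFun {α R : Type*} [LinearOrder α] [Zero R] (u : (Fin q → α) → R) (S : Finset α) : R :=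
  if h : #S = q then u (S.orderEmbOfFin h) else 0

lemma toFinsetFun_image {α R : Type*} [LinearOrder α] [Zero R] (u : (Fin q → α) → R)
    {I : Fin q → α} (hI : StrictMono I) :
    toFinsetFun u (univ.image I) = u I := by
  have hcard := card_image_of_strictMono hI
  rw [toFinsetFun, dif_pos hcard, ← orderEmbOfFin_unique hcard (by simp) hI]

lemma toFinsetFun_of_card_ne {α R : Type*} [LinearOrder α] [Zero R] (u : (Fin q → α) → R)
    {S : Finset α} (hS : #S ≠ q) :
    toFinsetFun u S = 0 :=
  dif_neg hS

lemma contract_toFinsetFun_of_card_ne {α R : Type*} [LinearOrder α] [CommRing R]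
    (u : (Fin (p + 1) → α) → R) (k : α) {S : Finset α} (hS : #S ≠ p) :
    contract k (toFinsetFun u) S = 0 := by
  rw [contract_apply]
  split_ifs with hk
  · rfl
  · rw [toFinsetFun_of_card_ne u (by rw [card_insert_of_notMem hk]; omega), mul_zero]

lemma sum_Incr_mul_eq_dotProduct {R : Type*} [NonUnitalNonAssocSemiring R]
    {f g : Finset (Fin n) → R} (hf : ∀ S, #S ≠ q → f S = 0) :
    ∑ J ∈ Incr n q, f (univ.image J) * g (univ.image J) = f ⬝ᵥ g := by
  rw [sum_Incr_image fun S => f S * g S, dotProduct]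
  refine sum_subset (filter_subset _ _) fun S _ hS => ?_
  rw [hf S (by simpa using hS), zero_mul]

lemma eq_wedgeVec_one {w : (Fin (p + 1) → Fin n) → ℂ} {a : Fin n → ℂ}
    (hw : ∀ I ∈ Incr n (p + 1), w I = ∑ i : Fin (p + 1),
      ((permSign (cons' (p + 1) (I i) (removeIdx I i)) I : ℤ) : ℂ) * a (I i))
    {I : Fin (p + 1) → Fin n} (hI : StrictMono I) : w I = wedgeVec a 1 (univ.image I) := by
  have wedge_sum (S : Finset (Fin n)) : wedgeVec a 1 S = ∑ m ∈ S, (insertSign m S : ℂ) * a m := by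
    have erase_sign (m : Fin n) (hm : m ∈ S) : insertSign m (S.erase m) = insertSign m S := by
      rw [← insertSign_insert_self, insert_erase hm]
    simp +contextual [wedgeVec_apply, wedge_apply, erase_sign, mul_comm]
  rw [hw I (mem_Incr.2 hI), wedge_sum, sum_image hI.injective.injOn]
  exact sum_congr rfl fun i _ => by rw [permSign_cons'_removeIdx hI]

lemma sum_pairing_sub_sum_pairing {j : ℕ} (H : Matrix (Fin n) (Fin n) ℂ) (a : Fin n → ℂ)
    (φ w : (Fin j → Fin n) → ℂ) :
    (∑ J ∈ Incr n (j - 1), ∑ k, ∑ l, H l k * φ (cons' j l J) * a k)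
      - (∑ J ∈ Incr n (j - 1), ∑ k, ∑ l, H l k * φ (cons' j l J) * w (cons' j k J))
      = ∑ k, ∑ l, H l k * ∑ J ∈ Incr n (j - 1), φ (cons' j l J) * (a k - w (cons' j k J)) := by
  simp only [← sum_sub_distrib, ← mul_sub, mul_assoc, mul_sum]
  rw [sum_comm]
  exact sum_congr rfl fun k _ => sum_comm

lemma sum_sum_eq_sum_diag_add {ι M : Type*} [Fintype ι] [DecidableEq ι] [AddCommMonoid M]
    (F : ι → ι → M) :
    ∑ k, ∑ l, F k l = ∑ k, F k k + ∑ k, ∑ l, if k = l then 0 else F k l := by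
  rw [← sum_add_distrib]
  refine sum_congr rfl fun k _ => ?_
  simp only [← add_sum_erase _ (F k) (mem_univ k), ← filter_ne, sum_filter, ite_not]

variable {a : Fin n → ℂ} {φ w : (Fin (p + 1) → Fin n) → ℂ}

lemma sum_pairing_eq_neg_sum_wedge (hφ : IsCoeff φ) (hw : IsCoeff w)
    (hwa : ∀ I, StrictMono I → w I = wedgeVec a 1 (univ.image I)) (k l : Fin n) :
    ∑ J ∈ Incr n p, φ (cons' (p + 1) l J) * (a k - w (cons' (p + 1) k J))
      = -∑ J ∈ Incr n p, (∑ m, a m * φ (cons' (p + 1) m J))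
          * wedge l (contract k 1) (univ.image J) := by
  have φ_cons' : ∀ J ∈ Incr n p, ∀ m,
      φ (cons' (p + 1) m J) = contract m (toFinsetFun φ) (univ.image J) := fun J hJ m =>
    hφ.apply_cons' (fun I hI => (toFinsetFun_image φ hI).symm) (mem_Incr.1 hJ) m
  have w_cons' : ∀ J ∈ Incr n p,
      w (cons' (p + 1) k J) = contract k (wedgeVec a 1) (univ.image J) := fun J hJ =>
    hw.apply_cons' hwa (mem_Incr.1 hJ) k
  calc ∑ J ∈ Incr n p, φ (cons' (p + 1) l J) * (a k - w (cons' (p + 1) k J))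
      = ∑ J ∈ Incr n p, contract l (toFinsetFun φ) (univ.image J)
          * (a k • 1 - contract k (wedgeVec a 1)) (univ.image J) :=
        sum_congr rfl fun J hJ => by rw [φ_cons' J hJ, w_cons' J hJ]; simp
    _ = contract l (toFinsetFun φ) ⬝ᵥ (a k • 1 - contract k (wedgeVec a 1)) :=
        sum_Incr_mul_eq_dotProduct fun S hS => contract_toFinsetFun_of_card_ne φ l hS
    _ = -(contractVec a (toFinsetFun φ) ⬝ᵥ wedge l (contract k 1)) :=
        contract_dotProduct_smul_sub_contract_wedgeVec a k l _ _
    _ = -∑ J ∈ Incr n p, contractVec a (toFinsetFun φ) (univ.image J)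
          * wedge l (contract k 1) (univ.image J) := by
        rw [sum_Incr_mul_eq_dotProduct fun S hS => ?_]
        simp [contractVec_apply, contract_toFinsetFun_of_card_ne φ _ hS]
    _ = _ := by
        congr 1
        refine sum_congr rfl fun J hJ => ?_
        simp only [φ_cons' J hJ, contractVec_apply, Finset.sum_apply, Pi.smul_apply, smul_eq_mul]

lemma sum_pairing_self (hφ : IsCoeff φ) (hw : IsCoeff w)
    (hwa : ∀ I, StrictMono I → w I = wedgeVec a 1 (univ.image I)) (k : Fin n) :
    ∑ J ∈ Incr n p, φ (cons' (p + 1) k J) * (a k - w (cons' (p + 1) k J))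
      = -∑ J ∈ Incr n p with ∃ i, J i = k, ∑ m, a m * φ (cons' (p + 1) m J) := by
  rw [sum_pairing_eq_neg_sum_wedge hφ hw hwa, sum_filter]
  simp [wedge_contract_one_self]

lemma sum_pairing_of_ne (hφ : IsCoeff φ) (hw : IsCoeff w)
    (hwa : ∀ I, StrictMono I → w I = wedgeVec a 1 (univ.image I))
    {k l : Fin n} (hkl : k ≠ l) :
    ∑ J ∈ Incr n p, φ (cons' (p + 1) l J) * (a k - w (cons' (p + 1) k J))
      = ∑ J ∈ Incr n p with (∃ i, J i = l) ∧ ∀ i, J i ≠ k,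
          ((permSign (cons' (p + 1) l (sortedTuple p (insert k ((univ.image J).erase l)) k))
            (cons' (p + 1) k J) : ℤ) : ℂ) * ∑ m, a m * φ (cons' (p + 1) m J) := by
  rw [sum_pairing_eq_neg_sum_wedge hφ hw hwa, sum_filter, ← sum_neg_distrib]
  refine sum_congr rfl fun J hJ => ?_
  have hJ := mem_Incr.1 hJ
  have mem_iff : ((∃ i, J i = l) ∧ ∀ i, J i ≠ k) ↔ l ∈ univ.image J ∧ k ∉ univ.image J := by simp
  rw [wedge_contract_one_of_ne hkl]
  simp only [mem_iff]
  split_ifs with h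
  · have hcard : #(insert k ((univ.image J).erase l)) = p := by
      rw [card_insert_of_notMem fun hk => h.2 (mem_of_mem_erase hk), card_erase_add_one h.1,
        card_image_of_strictMono hJ]
    have himage := image_orderEmbOfFin_univ _ hcard
    rw [sortedTuple_eq_orderEmbOfFin hcard,
      permSign_cons'_cons' hJ (orderEmbOfFin _ hcard).strictMono h.2 (by simp [himage, hkl.symm])
      (by rw [himage, insert_comm, insert_erase h.1]), himage]
    push_cast
    ring
  · rw [Int.cast_zero, mul_zero, neg_zero]

end CoefficientSystems

end HM

/-- the exact error-term identity of Lemma 4.3. -/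
theorem hessian_pairing_error_identity (n j : ℕ) (hn : 1 ≤ n) (hj1 : 1 ≤ j) (hjn : j ≤ n)
    (H : Matrix (Fin n) (Fin n) ℂ) (a : Fin n → ℂ)
    (φ : (Fin j → Fin n) → ℂ) (hφ : HM.IsCoeff φ)
    (w : (Fin j → Fin n) → ℂ) (hw : HM.IsCoeff w)
    (hwdef : ∀ I ∈ HM.Incr n j, w I = ∑ i : Fin j,
      ((HM.permSign (HM.cons' j (I i) (HM.removeIdx I i)) I : ℤ) : ℂ) * a (I i)) :
    (∑ J ∈ HM.Incr n (j - 1), ∑ k : Fin n, ∑ l : Fin n,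
        H l k * φ (HM.cons' j l J) * a k)
      - (∑ J ∈ HM.Incr n (j - 1), ∑ k : Fin n, ∑ l : Fin n,
          H l k * φ (HM.cons' j l J) * w (HM.cons' j k J))
    = -(∑ k : Fin n, H k k *
          ∑ J ∈ (HM.Incr n (j - 1)).filter (fun J => ∃ i, J i = k),
            ∑ m : Fin n, a m * φ (HM.cons' j m J))
      + ∑ k : Fin n, ∑ l : Fin n, (if k = l then 0 else
          H l k * ∑ J ∈ (HM.Incr n (j - 1)).filter (fun J => (∃ i, J i = l) ∧ ∀ i, J i ≠ k),
            ((HM.permSign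
                (HM.cons' j l (HM.sortedTuple (j - 1)
                  (insert k ((Finset.image J Finset.univ).erase l)) k))
                (HM.cons' j k J) : ℤ) : ℂ)
              * ∑ m : Fin n, a m * φ (HM.cons' j m J)) := by
  obtain ⟨p, rfl⟩ := Nat.exists_eq_add_of_le' hj1
  have hwa : ∀ I, StrictMono I → w I = HM.wedgeVec a 1 (Finset.univ.image I) :=
    fun I hI => HM.eq_wedgeVec_one hwdef hI
  rw [HM.sum_pairing_sub_sum_pairing, HM.sum_sum_eq_sum_diag_add, ← Finset.sum_neg_distrib]
  congr 1
  · refine Finset.sum_congr rfl fun k _ => ?_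
    rw [← mul_neg]
    exact congrArg (H k k * ·) (HM.sum_pairing_self hφ hw hwa k)
  · refine Finset.sum_congr rfl fun k _ => Finset.sum_congr rfl fun l _ => ?_
    split_ifs with hkl
    · rfl
    · exact congrArg (H l k * ·) (HM.sum_pairing_of_ne hφ hw hwa hkl)
end

section
/- Let U ⊆ ℂⁿ be open, f : U → ℝ a C² function, z ∈ U with f(z) < 0, and s ∈ (0,1). Then −(−f)^s is twice differentiable at z and for every (0,q)-coefficient system u (1 ≤ q ≤ n): i∂∂̄(−(−f)^s)(u,u)(z) = s(−f(z))^{s−1} · i∂∂̄f(u,u)(z) + s(1−s)(−f(z))^{s−2} · Σ'_{|J|=q−1} |Σ_{k=1}^n (∂f/∂z_k)(z) u_{kJ}|². -/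
open scoped BigOperators
open MeasureTheory

/-!
Since `f` is real-valued, `∂f/∂z̄_k` is the conjugate of `∂f/∂z_k`, so the chain and Leibniz rules
give the matrix identity `∂²(φ ∘ f) = φ'(f) ∂²f + φ''(f) ∂f ⊗ conj ∂f` for every `φ : ℝ → ℝ`. The
form of a matrix is linear in the matrix, and on the rank-one term it is a sum of squares. The power
`φ t = -(-t) ^ s` has `φ' t = s (-t) ^ (s - 1)` and `φ'' t = s (1 - s) (-t) ^ (s - 2)`.
-/

open Filter Topology

namespace HM

section Wirtinger

variable {n : ℕ} {f : (Fin n → ℂ) → ℝ} {w : Fin n → ℂ}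

theorem fderiv_ofReal_comp_apply {E : Type*} [NormedAddCommGroup E] [NormedSpace ℝ E]
    {g : E → ℝ} {x : E} (hg : DifferentiableAt ℝ g x) (v : E) :
    fderiv ℝ (fun y => (g y : ℂ)) x v = (fderiv ℝ g x v : ℂ) := by
  have h : HasFDerivAt (fun y => (g y : ℂ)) (Complex.ofRealCLM.comp (fderiv ℝ g x)) x :=
    Complex.ofRealCLM.hasFDerivAt.comp x hg.hasFDerivAt
  simp [h.fderiv]

theorem fderiv_scomp_apply {E : Type*} [NormedAddCommGroup E] [NormedSpace ℝ E]
    {g : E → ℝ} {x : E} {φ : ℝ → ℂ} {φ' : ℂ} (hφ : HasDerivAt φ φ' (g x))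
    (hg : DifferentiableAt ℝ g x) (v : E) :
    fderiv ℝ (fun y => φ (g y)) x v = φ' * fderiv ℝ (fun y => (g y : ℂ)) x v := by
  have h : HasFDerivAt (fun y => φ (g y)) _ x := hφ.hasFDerivAt.comp x hg.hasFDerivAt
  simp [h.fderiv, fderiv_ofReal_comp_apply hg, mul_comm]

theorem dz_scomp {φ : ℝ → ℂ} {φ' : ℂ} (hφ : HasDerivAt φ φ' (f w))
    (hf : DifferentiableAt ℝ f w) (k : Fin n) :
    dz (fun y => φ (f y)) k w = φ' * dz (fun y => (f y : ℂ)) k w := by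
  simp only [dz, fderiv_scomp_apply hφ hf]
  ring

theorem dzbar_scomp {φ : ℝ → ℂ} {φ' : ℂ} (hφ : HasDerivAt φ φ' (f w))
    (hf : DifferentiableAt ℝ f w) (k : Fin n) :
    dzbar (fun y => φ (f y)) k w = φ' * dzbar (fun y => (f y : ℂ)) k w := by
  simp only [dzbar, fderiv_scomp_apply hφ hf]
  ring

theorem dzbar_ofReal_eq_star_dz (hf : DifferentiableAt ℝ f w) (k : Fin n) :
    dzbar (fun y => (f y : ℂ)) k w = star (dz (fun y => (f y : ℂ)) k w) := by
  simp [dz, dzbar, fderiv_ofReal_comp_apply hf]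

theorem dz_mul {a b : (Fin n → ℂ) → ℂ} (ha : DifferentiableAt ℝ a w)
    (hb : DifferentiableAt ℝ b w) (k : Fin n) :
    dz (fun y => a y * b y) k w = a w * dz b k w + dz a k w * b w := by
  simp only [dz, fderiv_fun_mul ha hb, add_apply, smul_apply, smul_eq_mul]
  ring

theorem dz_congr_of_eventuallyEq {a b : (Fin n → ℂ) → ℂ} (h : a =ᶠ[𝓝 w] b) (k : Fin n) :
    dz a k w = dz b k w := by
  simp only [dz, h.fderiv_eq]

theorem differentiableAt_dzbar {a : (Fin n → ℂ) → ℂ} (ha : ContDiffAt ℝ 2 a w) (k : Fin n) :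
    DifferentiableAt ℝ (dzbar a k) w := by
  have hda : DifferentiableAt ℝ (fderiv ℝ a) w :=
    (ha.fderiv_right (m := 1) (by norm_num)).differentiableAt one_ne_zero
  unfold dzbar
  fun_prop

end Wirtinger

section HessianForm

variable {n : ℕ} {f : (Fin n → ℂ) → ℝ} {z : Fin n → ℂ} {φ φ' : ℝ → ℝ} {φ'' : ℝ}

/-- The complex gradient `(∂f/∂z_1, …, ∂f/∂z_n)` of a real-valued function. -/
noncomputable def gradW (f : (Fin n → ℂ) → ℝ) (z : Fin n → ℂ) : Fin n → ℂ :=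
  fun k => dz (fun w => (f w : ℂ)) k z

/-- The complex Hessian of a real-valued function as a matrix. The entry at row `l`, column `k` is
`∂²f/∂z_l∂z̄_k`, the index order that `mForm` expects. -/
noncomputable def hessMatrix (f : (Fin n → ℂ) → ℝ) (z : Fin n → ℂ) :
    Matrix (Fin n) (Fin n) ℂ :=
  Matrix.of fun l k => hessW f l k z

theorem hForm_eq_mForm_hessMatrix (q : ℕ) (f : (Fin n → ℂ) → ℝ) (u : (Fin q → Fin n) → ℂ)
    (z : Fin n → ℂ) : hForm q f u z = mForm q (hessMatrix f z) u u :=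
  rfl

theorem hessW_comp (hf : ContDiffAt ℝ 2 f z) (hφ : ∀ᶠ t in 𝓝 (f z), HasDerivAt φ (φ' t) t)
    (hφ' : HasDerivAt φ' φ'' (f z)) (l k : Fin n) :
    hessW (fun w => φ (f w)) l k z
      = φ' (f z) * hessW f l k z + φ'' * (gradW f z l * star (gradW f z k)) := by
  have hfz : DifferentiableAt ℝ f z := hf.differentiableAt two_ne_zero
  have dzbar_comp : (fun w => dzbar (fun y => (φ (f y) : ℂ)) k w) =ᶠ[𝓝 z]
      fun w => (φ' (f w) : ℂ) * dzbar (fun y => (f y : ℂ)) k w := by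
    filter_upwards [hf.eventually (by simp), hfz.continuousAt.eventually hφ] with w hfw hφw
    exact dzbar_scomp hφw.ofReal_comp (hfw.differentiableAt two_ne_zero) k
  have hφ'f : DifferentiableAt ℝ (fun w => (φ' (f w) : ℂ)) z :=
    hφ'.ofReal_comp.differentiableAt.comp z hfz
  have hdzbar : DifferentiableAt ℝ (dzbar (fun y => (f y : ℂ)) k) z :=
    differentiableAt_dzbar (Complex.ofRealCLM.contDiff.contDiffAt.comp z hf) k
  calc hessW (fun w => φ (f w)) l k z
      = dz (fun w => (φ' (f w) : ℂ) * dzbar (fun y => (f y : ℂ)) k w) l z :=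
        dz_congr_of_eventuallyEq dzbar_comp l
    _ = φ' (f z) * hessW f l k z
          + dz (fun w => (φ' (f w) : ℂ)) l z * dzbar (fun y => (f y : ℂ)) k z :=
        dz_mul hφ'f hdzbar l
    _ = φ' (f z) * hessW f l k z + φ'' * (gradW f z l * star (gradW f z k)) := by
        rw [dz_scomp hφ'.ofReal_comp hfz, dzbar_ofReal_eq_star_dz hfz, mul_assoc]
        rfl

theorem hessMatrix_comp (hf : ContDiffAt ℝ 2 f z)
    (hφ : ∀ᶠ t in 𝓝 (f z), HasDerivAt φ (φ' t) t) (hφ' : HasDerivAt φ' φ'' (f z)) :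
    hessMatrix (fun w => φ (f w)) z
      = (φ' (f z) : ℂ) • hessMatrix f z
        + (φ'' : ℂ) • Matrix.vecMulVec (gradW f z) (star (gradW f z)) := by
  ext l k
  exact hessW_comp hf hφ hφ' l k

theorem mForm_add (q : ℕ) (A B : Matrix (Fin n) (Fin n) ℂ) (u v : (Fin q → Fin n) → ℂ) :
    mForm q (A + B) u v = mForm q A u v + mForm q B u v := by
  simp only [mForm, Matrix.add_apply, add_mul, Finset.sum_add_distrib]

theorem mForm_smul (q : ℕ) (c : ℂ) (A : Matrix (Fin n) (Fin n) ℂ) (u v : (Fin q → Fin n) → ℂ) :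
    mForm q (c • A) u v = c * mForm q A u v := by
  simp only [mForm, Matrix.smul_apply, smul_eq_mul, mul_assoc, Finset.mul_sum]

theorem mForm_vecMulVec_star_self (q : ℕ) (d : Fin n → ℂ) (u : (Fin q → Fin n) → ℂ) :
    mForm q (Matrix.vecMulVec d (star d)) u u
      = ((∑ J ∈ Incr n (q - 1), ‖∑ k, d k * u (cons' q k J)‖ ^ 2 : ℝ) : ℂ) := by
  push_cast
  refine Finset.sum_congr rfl fun J _ => ?_
  calc ∑ k, ∑ l, d l * star (d k) * u (cons' q l J) * star (u (cons' q k J))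
      = (∑ l, d l * u (cons' q l J)) * star (∑ k, d k * u (cons' q k J)) := by
        rw [star_sum, Finset.sum_mul_sum, Finset.sum_comm]
        refine Finset.sum_congr rfl fun l _ => Finset.sum_congr rfl fun k _ => ?_
        rw [star_mul']
        ring
    _ = (‖∑ k, d k * u (cons' q k J)‖ : ℂ) ^ 2 := Complex.mul_conj' _

theorem hForm_comp (hf : ContDiffAt ℝ 2 f z) (hφ : ∀ᶠ t in 𝓝 (f z), HasDerivAt φ (φ' t) t)
    (hφ' : HasDerivAt φ' φ'' (f z)) (q : ℕ) (u : (Fin q → Fin n) → ℂ) :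
    hForm q (fun w => φ (f w)) u z
      = φ' (f z) * hForm q f u z
        + φ'' * ((∑ J ∈ Incr n (q - 1), ‖∑ k, gradW f z k * u (cons' q k J)‖ ^ 2 : ℝ) : ℂ) := by
  rw [hForm_eq_mForm_hessMatrix, hessMatrix_comp hf hφ hφ', mForm_add, mForm_smul, mForm_smul,
    mForm_vecMulVec_star_self, hForm_eq_mForm_hessMatrix]

end HessianForm

theorem hasDerivAt_neg_rpow (s : ℝ) {t : ℝ} (ht : t ≠ 0) :
    HasDerivAt (fun x : ℝ => (-x) ^ s) (-(s * (-t) ^ (s - 1))) t := by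
  simpa using (hasDerivAt_neg t).rpow_const (p := s) (Or.inl (neg_ne_zero.mpr ht))

end HM

theorem hessian_of_power_general {n : ℕ} {f : (Fin n → ℂ) → ℝ} {z : Fin n → ℂ}
    (hf : ContDiffAt ℝ 2 f z) (hfz : f z < 0) (s : ℝ) :
    ContDiffAt ℝ 2 (fun w => -((-(f w)) ^ s)) z ∧
      ∀ q : ℕ, 1 ≤ q → ∀ u : (Fin q → Fin n) → ℂ,
        HM.hForm q (fun w => -((-(f w)) ^ s)) u z
          = ((s * (-(f z)) ^ (s - 1) : ℝ) : ℂ) * HM.hForm q f u z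
            + ((s * (1 - s) * (-(f z)) ^ (s - 2) : ℝ) : ℂ) *
                ((∑ J ∈ HM.Incr n (q - 1),
                  ‖∑ k : Fin n, HM.dz (fun w => ((f w : ℝ) : ℂ)) k z *
                    u (HM.cons' q k J)‖ ^ 2 : ℝ) : ℂ) := by
  have hφ : ∀ᶠ t in 𝓝 (f z),
      HasDerivAt (fun x : ℝ => -((-x) ^ s)) (s * (-t) ^ (s - 1)) t := by
    filter_upwards [eventually_ne_nhds hfz.ne] with t ht
    simpa using (HM.hasDerivAt_neg_rpow s ht).fun_neg
  have hφ' : HasDerivAt (fun x : ℝ => s * (-x) ^ (s - 1))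
      (s * (1 - s) * (-(f z)) ^ (s - 2)) (f z) := by
    refine ((HM.hasDerivAt_neg_rpow (s - 1) hfz.ne).const_mul s).congr_deriv ?_
    rw [show s - 1 - 1 = s - 2 by ring]
    ring
  exact ⟨(hf.neg.rpow_const_of_ne (neg_ne_zero.mpr hfz.ne)).neg,
    fun q _ u => HM.hForm_comp hf hφ hφ' q u⟩

/-- the Hessian of `−(−f)^s` at a point where `f < 0`:
`i∂∂̄(−(−f)^s)(u,u) = s(−f)^{s−1} i∂∂̄f(u,u) + s(1−s)(−f)^{s−2} Σ'_J |Σ_k ∂f/∂z_k u_{kJ}|²`. -/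
theorem hessian_of_power (n : ℕ) (hn : 1 ≤ n)
    (U : Set (Fin n → ℂ)) (hU : IsOpen U)
    (f : (Fin n → ℂ) → ℝ) (hf : ContDiffOn ℝ 2 f U)
    (z : Fin n → ℂ) (hz : z ∈ U) (hfz : f z < 0)
    (s : ℝ) (hs : s ∈ Set.Ioo (0 : ℝ) 1) :
    ContDiffAt ℝ 2 (fun w => -((-(f w)) ^ s)) z ∧
      ∀ q : ℕ, 1 ≤ q → q ≤ n → ∀ u : (Fin q → Fin n) → ℂ, HM.IsCoeff u →
        HM.hForm q (fun w => -((-(f w)) ^ s)) u z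
          = ((s * (-(f z)) ^ (s - 1) : ℝ) : ℂ) * HM.hForm q f u z
            + ((s * (1 - s) * (-(f z)) ^ (s - 2) : ℝ) : ℂ) *
                ((∑ J ∈ HM.Incr n (q - 1),
                  ‖∑ k : Fin n, HM.dz (fun w => ((f w : ℝ) : ℂ)) k z *
                    u (HM.cons' q k J)‖ ^ 2 : ℝ) : ℂ) :=
  have general := hessian_of_power_general (hf.contDiffAt (hU.mem_nhds hz)) hfz s
  ⟨general.1, fun q hq _ u _ => general.2 q hq u⟩
end
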